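/- Let ψ be an n-qubit stabilizer state with independent generating set s_1, g_2, …, g_n of 𝒮(ψ) such that Z_1 anticommutes with s_1 and commutes with each g_i (i ≥ 2), let 𝒢 be the group generated by {g_2,…,g_n}, and let φ = T_1ψ. Let M ∈ 𝒫_n be Hermitian and suppose M anticommutes with at least one element of 𝒢. Then for any m ∈ {+1,−1} with Πφ ≠ 0, where Π = (I + mM)/2, the normalized post-measurement state Πφ/‖Πφ‖ is NOT a stabilizer state. -/

import Mathlib

noncomputable section
namespace PaperFormal

open Matrix

/-- The space of `n`-qubit operators: matrices indexed by computational basis states. -/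
abbrev QMat (n : ℕ) := Matrix (Fin n → Fin 2) (Fin n → Fin 2) ℂ

/-- The space of `n`-qubit state vectors. -/
abbrev QVec (n : ℕ) := (Fin n → Fin 2) → ℂ

def σI : Matrix (Fin 2) (Fin 2) ℂ := 1
def σX : Matrix (Fin 2) (Fin 2) ℂ := !![0, 1; 1, 0]
def σY : Matrix (Fin 2) (Fin 2) ℂ := !![0, -Complex.I; Complex.I, 0]
def σZ : Matrix (Fin 2) (Fin 2) ℂ := !![1, 0; 0, -1]

def IsPauliFactor (m : Matrix (Fin 2) (Fin 2) ℂ) : Prop :=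
  m = σI ∨ m = σX ∨ m = σY ∨ m = σZ

/-- Kronecker product over `n` qubits of single-qubit matrices. -/
def kron {n : ℕ} (σ : Fin n → Matrix (Fin 2) (Fin 2) ℂ) : QMat n :=
  fun v w => ∏ j, σ j (v j) (w j)

/-- Membership in the `n`-qubit Pauli group `𝒫_n`:
`M = i^k σ_1 ⊗ ⋯ ⊗ σ_n` with each `σ_j ∈ {I, X, Y, Z}`. -/
def IsPauli {n : ℕ} (M : QMat n) : Prop :=
  ∃ (k : Fin 4) (σ : Fin n → Matrix (Fin 2) (Fin 2) ℂ),
    (∀ j, IsPauliFactor (σ j)) ∧ M = Complex.I ^ (k : ℕ) • kron σ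

/-- A Pauli operator supported on the set `A` of qubits (identity factors outside `A`). -/
def PauliSupportedOn {n : ℕ} (M : QMat n) (A : Set (Fin n)) : Prop :=
  ∃ (k : Fin 4) (σ : Fin n → Matrix (Fin 2) (Fin 2) ℂ),
    (∀ j, IsPauliFactor (σ j)) ∧ (∀ j, j ∉ A → σ j = σI) ∧
    M = Complex.I ^ (k : ℕ) • kron σ

/-- The Pauli `M` has identity (`j`-th Kronecker factor proportional to identity) at qubit `j`. -/
def PauliTrivialAt {n : ℕ} (M : QMat n) (j : Fin n) : Prop :=
  PauliSupportedOn M {i | i ≠ j}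

/-- The single-qubit operator `m` placed at qubit `j` (identity elsewhere). -/
def opAt {n : ℕ} (j : Fin n) (m : Matrix (Fin 2) (Fin 2) ℂ) : QMat n :=
  kron (fun i => if i = j then m else σI)

/-- Inner product `⟨φ, ψ⟩` (antilinear in the first argument). -/
def innerC {n : ℕ} (φ ψ : QVec n) : ℂ := ∑ v, (starRingEnd ℂ) (φ v) * ψ v

/-- Squared norm `‖ψ‖²`. -/
def nrmSq {n : ℕ} (ψ : QVec n) : ℝ := ∑ v, Complex.normSq (ψ v)

/-- The stabilizer group `𝒮(ψ) = {P ∈ 𝒫_n : Pψ = ψ}`. -/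
def stabGroup {n : ℕ} (ψ : QVec n) : Set (QMat n) :=
  {P | IsPauli P ∧ P.mulVec ψ = ψ}

/-- An `n`-qubit pure stabilizer state: a unit vector whose stabilizer group has `2^n` elements. -/
def IsStabState {n : ℕ} (ψ : QVec n) : Prop :=
  nrmSq ψ = 1 ∧ (stabGroup ψ).ncard = 2 ^ n

/-- The product `∏ i, g i ^ α i` (in the fixed order of indices). -/
def prodPow {n m : ℕ} (g : Fin m → QMat n) (α : Fin m → ZMod 2) : QMat n :=
  (List.ofFn fun i => g i ^ (α i).val).prod

/-- `g` is an independent generating set of `𝒮(ψ)`: the map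
`(α_i) ↦ ∏ g_i^{α_i}` is a bijection from `(ℤ/2)^m` onto `𝒮(ψ)`. -/
def IsIndepGenSet {n m : ℕ} (ψ : QVec n) (g : Fin m → QMat n) : Prop :=
  (∀ i, g i ∈ stabGroup ψ) ∧ Function.Injective (prodPow g) ∧
    Set.range (prodPow g) = stabGroup ψ

/-- The `T` gate `diag(1, e^{iπ/4})`. -/
def Tgate : Matrix (Fin 2) (Fin 2) ℂ :=
  !![1, 0; 0, Complex.exp (Real.pi * Complex.I / 4)]

lemma kron_mul {n : ℕ} (σ τ : Fin n → Matrix (Fin 2) (Fin 2) ℂ) :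
    kron σ * kron τ = kron fun j => σ j * τ j := by
  ext v w
  simp only [kron, Matrix.mul_apply, ← Finset.prod_mul_distrib, Finset.prod_univ_sum,
    Fintype.piFinset_univ]

lemma kron_smul {n : ℕ} (c : Fin n → ℂ) (σ : Fin n → Matrix (Fin 2) (Fin 2) ℂ) :
    (kron fun j => c j • σ j) = (∏ j, c j) • kron σ := by
  ext v w
  simp [kron, Finset.prod_mul_distrib]

lemma kron_one {n : ℕ} : (kron fun _ => 1 : QMat n) = 1 := by
  ext v w
  simp [kron, Matrix.one_apply, Finset.prod_ite_zero, funext_iff]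

lemma kron_conjTranspose {n : ℕ} (σ : Fin n → Matrix (Fin 2) (Fin 2) ℂ) :
    (kron σ)ᴴ = kron fun j => (σ j)ᴴ := by
  ext v w
  simp [kron, Matrix.conjTranspose_apply]

lemma trace_kron {n : ℕ} (σ : Fin n → Matrix (Fin 2) (Fin 2) ℂ) :
    (kron σ).trace = ∏ j, (σ j).trace := by
  simp only [kron, Matrix.trace, Matrix.diag, Finset.prod_univ_sum, Fintype.piFinset_univ]

lemma IsPauliFactor.mul_self {s : Matrix (Fin 2) (Fin 2) ℂ} (hs : IsPauliFactor s) :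
    s * s = 1 := by
  rcases hs with rfl | rfl | rfl | rfl <;>
    simp [σI, σX, σY, σZ, Matrix.one_fin_two]

lemma IsPauliFactor.conjTranspose {s : Matrix (Fin 2) (Fin 2) ℂ} (hs : IsPauliFactor s) :
    sᴴ = s := by
  rcases hs with rfl | rfl | rfl | rfl <;> ext i j <;> fin_cases i <;> fin_cases j <;>
    simp [σI, σX, σY, σZ]

lemma IsPauliFactor.trace_eq_zero {s : Matrix (Fin 2) (Fin 2) ℂ} (hs : IsPauliFactor s)
    (h : s ≠ 1) : s.trace = 0 := by
  rcases hs with rfl | rfl | rfl | rfl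
  · exact absurd rfl h
  all_goals simp [σX, σY, σZ, Matrix.trace_fin_two]

/-- A product of two Pauli factors is a Pauli factor up to a power of `i`. -/
lemma IsPauliFactor.exists_mul {s t : Matrix (Fin 2) (Fin 2) ℂ} (hs : IsPauliFactor s)
    (ht : IsPauliFactor t) :
    ∃ (k : ℕ) (u : Matrix (Fin 2) (Fin 2) ℂ), IsPauliFactor u ∧ s * t = Complex.I ^ k • u := by
  have hI : Complex.I ^ 3 = -Complex.I := Complex.I_pow_three
  rcases hs with rfl | rfl | rfl | rfl <;> rcases ht with rfl | rfl | rfl | rfl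
  · exact ⟨0, σI, by simp [IsPauliFactor], by simp [σI]⟩
  · exact ⟨0, σX, by simp [IsPauliFactor], by simp [σI]⟩
  · exact ⟨0, σY, by simp [IsPauliFactor], by simp [σI]⟩
  · exact ⟨0, σZ, by simp [IsPauliFactor], by simp [σI]⟩
  · exact ⟨0, σX, by simp [IsPauliFactor], by simp [σI]⟩
  · exact ⟨0, σI, by simp [IsPauliFactor], by simp [σI, σX, Matrix.one_fin_two]⟩
  · exact ⟨1, σZ, by simp [IsPauliFactor], by simp [σX, σY, σZ]⟩
  · exact ⟨3, σY, by simp [IsPauliFactor], by simp [σX, σY, σZ, hI]⟩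
  · exact ⟨0, σY, by simp [IsPauliFactor], by simp [σI]⟩
  · exact ⟨3, σZ, by simp [IsPauliFactor], by simp [σX, σY, σZ, hI]⟩
  · exact ⟨0, σI, by simp [IsPauliFactor], by simp [σI, σY, Matrix.one_fin_two]⟩
  · exact ⟨1, σX, by simp [IsPauliFactor], by simp [σX, σY, σZ]⟩
  · exact ⟨0, σZ, by simp [IsPauliFactor], by simp [σI]⟩
  · exact ⟨1, σY, by simp [IsPauliFactor], by simp [σX, σY, σZ]⟩
  · exact ⟨3, σX, by simp [IsPauliFactor], by simp [σX, σY, σZ, hI]⟩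
  · exact ⟨0, σI, by simp [IsPauliFactor], by simp [σI, σZ, Matrix.one_fin_two]⟩

lemma IsPauliFactor.exists_mul_comm {s t : Matrix (Fin 2) (Fin 2) ℂ} (hs : IsPauliFactor s)
    (ht : IsPauliFactor t) : ∃ e : ℂ, (e = 1 ∨ e = -1) ∧ s * t = e • (t * s) := by
  rcases hs with rfl | rfl | rfl | rfl <;> rcases ht with rfl | rfl | rfl | rfl <;>
    first
    | (refine ⟨1, Or.inl rfl, ?_⟩; simp [σI]; done)
    | exact ⟨-1, Or.inr rfl, by simp [σX, σY, σZ]⟩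

lemma I_pow_smul_kron_isPauli {n : ℕ} (k : ℕ) {σ : Fin n → Matrix (Fin 2) (Fin 2) ℂ}
    (hσ : ∀ j, IsPauliFactor (σ j)) : IsPauli (Complex.I ^ k • kron σ) :=
  ⟨⟨k % 4, Nat.mod_lt _ (by norm_num)⟩, σ, hσ, by rw [← Complex.I_pow_eq_pow_mod]⟩

lemma isPauli_one {n : ℕ} : IsPauli (1 : QMat n) :=
  ⟨0, fun _ => 1, fun _ => Or.inl rfl, by simp [kron_one]⟩

lemma IsPauli.mul {n : ℕ} {P Q : QMat n} (hP : IsPauli P) (hQ : IsPauli Q) :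
    IsPauli (P * Q) := by
  obtain ⟨k, σ, hσ, rfl⟩ := hP
  obtain ⟨l, τ, hτ, rfl⟩ := hQ
  choose e u hu he using fun j => (hσ j).exists_mul (hτ j)
  convert I_pow_smul_kron_isPauli ((k : ℕ) + l + ∑ j, e j) hu using 1
  simp only [Matrix.smul_mul, Matrix.mul_smul, kron_mul, he, kron_smul, smul_smul,
    Finset.prod_pow_eq_pow_sum, pow_add]
  congr 1
  ring

lemma IsPauli.commute_or_anticommute {n : ℕ} {P Q : QMat n} (hP : IsPauli P)
    (hQ : IsPauli Q) : P * Q = Q * P ∨ P * Q = -(Q * P) := by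
  obtain ⟨k, σ, hσ, rfl⟩ := hP
  obtain ⟨l, τ, hτ, rfl⟩ := hQ
  choose e he h using fun j => (hσ j).exists_mul_comm (hτ j)
  have hprod : ∏ j, e j = 1 ∨ ∏ j, e j = -1 := by
    refine Finset.prod_induction e (fun x => x = 1 ∨ x = -1) ?_ (Or.inl rfl) fun j _ => he j
    rintro a b (rfl | rfl) (rfl | rfl) <;> simp
  simp only [Matrix.smul_mul, Matrix.mul_smul, kron_mul, h, kron_smul]
  rcases hprod with h1 | h1 <;> rw [h1]
  · left; rw [one_smul, smul_comm]
  · right; rw [neg_one_smul, smul_neg, smul_neg, smul_comm]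

lemma IsPauli.mul_self {n : ℕ} {P : QMat n} (hP : IsPauli P) : P * P = 1 ∨ P * P = -1 := by
  obtain ⟨k, σ, hσ, rfl⟩ := hP
  have h : (Complex.I ^ (k : ℕ) * Complex.I ^ (k : ℕ)) = (-1) ^ (k : ℕ) := by
    rw [← mul_pow, Complex.I_mul_I]
  simp only [Matrix.smul_mul, Matrix.mul_smul, kron_mul, (hσ _).mul_self, kron_one, smul_smul, h]
  rcases neg_one_pow_eq_or ℂ (k : ℕ) with h1 | h1 <;> simp [h1]

lemma IsPauli.conjTranspose_mul_self {n : ℕ} {P : QMat n} (hP : IsPauli P) : Pᴴ * P = 1 := by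
  obtain ⟨k, σ, hσ, rfl⟩ := hP
  simp only [Matrix.conjTranspose_smul, kron_conjTranspose, (hσ _).conjTranspose,
    Matrix.smul_mul, Matrix.mul_smul, kron_mul, (hσ _).mul_self, kron_one, smul_smul]
  rw [star_pow, ← mul_pow]
  simp

lemma IsPauli.eq_smul_one_or_trace_eq_zero {n : ℕ} {P : QMat n} (hP : IsPauli P) :
    (∃ c : ℂ, P = c • (1 : QMat n)) ∨ P.trace = 0 := by
  obtain ⟨k, σ, hσ, rfl⟩ := hP
  by_cases h : ∀ j, σ j = 1
  · left
    obtain rfl : σ = fun _ => 1 := funext h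
    exact ⟨_, by rw [kron_one]⟩
  · right
    push Not at h
    obtain ⟨j, hj⟩ := h
    rw [Matrix.trace_smul, trace_kron,
      Finset.prod_eq_zero (Finset.mem_univ j) ((hσ j).trace_eq_zero hj), smul_zero]

lemma opAt_apply {n : ℕ} (j : Fin n) (s : Matrix (Fin 2) (Fin 2) ℂ) (v w : Fin n → Fin 2) :
    opAt j s v w = s (v j) (w j) * ∏ i ∈ Finset.univ.erase j, σI (v i) (w i) := by
  rw [opAt, kron, ← Finset.mul_prod_erase _ _ (Finset.mem_univ j)]
  congr 1
  · simp
  · refine Finset.prod_congr rfl fun i hi => ?_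
    rw [if_neg (Finset.ne_of_mem_erase hi)]

lemma opAt_one {n : ℕ} (j : Fin n) : opAt j 1 = 1 := by
  rw [← kron_one, opAt]
  simp [σI]

lemma isPauli_opAt_σZ {n : ℕ} (j : Fin n) : IsPauli (opAt j σZ) := by
  refine ⟨0, _, fun i => ?_, by rw [opAt]; simp; rfl⟩
  split_ifs <;> simp [IsPauliFactor]

lemma opAt_σZ_conjTranspose {n : ℕ} (j : Fin n) : (opAt j σZ)ᴴ = opAt j σZ := by
  rw [opAt, kron_conjTranspose]
  congr 1
  funext i
  apply IsPauliFactor.conjTranspose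
  split_ifs <;> simp [IsPauliFactor]

lemma opAt_σZ_mul_self {n : ℕ} (j : Fin n) : opAt j σZ * opAt j σZ = 1 := by
  rw [← (isPauli_opAt_σZ j).conjTranspose_mul_self, opAt_σZ_conjTranspose]

/-- The phase `e^{iπ/4}` of the `T` gate. -/
def tPhase : ℂ := Complex.exp (Real.pi * Complex.I / 4)

lemma tPhase_sq : tPhase ^ 2 = Complex.I := by
  rw [tPhase, ← Complex.exp_nat_mul]
  convert Complex.exp_pi_div_two_mul_I using 2
  push_cast
  ring

lemma star_tPhase_mul : star tPhase * tPhase = 1 := by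
  have h : (Real.pi * Complex.I / 4 : ℂ) = ((Real.pi / 4 : ℝ) : ℂ) * Complex.I := by
    push_cast; ring
  rw [tPhase, h, Complex.star_def, ← Complex.normSq_eq_conj_mul_self,
    Complex.normSq_eq_norm_sq, Complex.norm_exp_ofReal_mul_I]
  simp

lemma opAt_Tgate {n : ℕ} (j : Fin n) :
    opAt j Tgate = ((1 + tPhase) / 2) • (1 : QMat n) + ((1 - tPhase) / 2) • opAt j σZ := by
  rw [← opAt_one j]
  ext v w
  have h : Tgate (v j) (w j) = (1 + tPhase) / 2 * (1 : Matrix (Fin 2) (Fin 2) ℂ) (v j) (w j)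
      + (1 - tPhase) / 2 * σZ (v j) (w j) := by
    generalize v j = a
    generalize w j = b
    fin_cases a <;> fin_cases b <;> simp [Tgate, σZ, tPhase] <;> ring
  simp only [Matrix.add_apply, Matrix.smul_apply, opAt_apply, h, smul_eq_mul]
  ring

/-- The unnormalized expectation `⟨φ, A φ⟩`. -/
def expect {n : ℕ} (φ : QVec n) (A : QMat n) : ℂ := star φ ⬝ᵥ (A *ᵥ φ)

lemma expect_add {n : ℕ} (φ : QVec n) (A B : QMat n) :
    expect φ (A + B) = expect φ A + expect φ B := by
  simp [expect, Matrix.add_mulVec]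

lemma expect_smul {n : ℕ} (φ : QVec n) (c : ℂ) (A : QMat n) :
    expect φ (c • A) = c * expect φ A := by
  simp [expect, Matrix.smul_mulVec]

lemma expect_mulVec {n : ℕ} (φ : QVec n) (A B : QMat n) :
    expect (B *ᵥ φ) A = expect φ (Bᴴ * A * B) := by
  rw [expect, expect, Matrix.star_mulVec, ← Matrix.dotProduct_mulVec, Matrix.mulVec_mulVec,
    Matrix.mulVec_mulVec]

lemma expect_one {n : ℕ} (φ : QVec n) : expect φ 1 = nrmSq φ := by
  simp [expect, nrmSq, dotProduct, Complex.normSq_eq_conj_mul_self]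

lemma expect_eq_zero_of_anticommute {n : ℕ} {φ : QVec n} {A Q : QMat n} (hQ : Qᴴ * Q = 1)
    (hφ : Q *ᵥ φ = φ) (h : A * Q = -(Q * A)) : expect φ A = 0 := by
  have h1 : expect φ A = -expect φ A := by
    conv_lhs => rw [← hφ, expect_mulVec, Matrix.mul_assoc, h, Matrix.mul_neg,
      ← Matrix.mul_assoc, hQ, Matrix.one_mul]
    simp [expect, Matrix.neg_mulVec]
  exact self_eq_neg.mp h1

lemma mul_mem_stabGroup {n : ℕ} {χ : QVec n} {P Q : QMat n} (hP : P ∈ stabGroup χ)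
    (hQ : Q ∈ stabGroup χ) : P * Q ∈ stabGroup χ :=
  ⟨hP.1.mul hQ.1, by rw [← Matrix.mulVec_mulVec, hQ.2, hP.2]⟩

lemma one_mem_stabGroup {n : ℕ} (χ : QVec n) : 1 ∈ stabGroup χ :=
  ⟨isPauli_one, Matrix.one_mulVec χ⟩

lemma ne_neg_of_ne_zero {n : ℕ} {χ : QVec n} (hχ : χ ≠ 0) : χ ≠ -χ :=
  fun h => hχ (self_eq_neg.mp h)

lemma mul_self_of_mem_stabGroup {n : ℕ} {χ : QVec n} (hχ : χ ≠ 0) {P : QMat n}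
    (hP : P ∈ stabGroup χ) : P * P = 1 := by
  refine hP.1.mul_self.resolve_right fun h => ne_neg_of_ne_zero hχ ?_
  have := (mul_mem_stabGroup hP hP).2
  rw [h, Matrix.neg_mulVec, Matrix.one_mulVec] at this
  exact this.symm

lemma commute_of_mem_stabGroup {n : ℕ} {χ : QVec n} (hχ : χ ≠ 0) {P Q : QMat n}
    (hP : P ∈ stabGroup χ) (hQ : Q ∈ stabGroup χ) : P * Q = Q * P := by
  refine (hP.1.commute_or_anticommute hQ.1).resolve_right fun h => ne_neg_of_ne_zero hχ ?_
  have h1 := (mul_mem_stabGroup hP hQ).2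
  rw [h, Matrix.neg_mulVec, (mul_mem_stabGroup hQ hP).2] at h1
  exact h1.symm

lemma trace_eq_zero_of_mem_stabGroup {n : ℕ} {χ : QVec n} (hχ : χ ≠ 0) {P : QMat n}
    (hP : P ∈ stabGroup χ) (h1 : P ≠ 1) : P.trace = 0 := by
  refine hP.1.eq_smul_one_or_trace_eq_zero.resolve_left ?_
  rintro ⟨c, rfl⟩
  refine h1 ?_
  have h := hP.2
  rw [Matrix.smul_mulVec, Matrix.one_mulVec] at h
  have hc : (c - 1) • χ = 0 := by rw [sub_smul, h, one_smul, sub_self]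
  rw [sub_eq_zero.mp ((smul_eq_zero.mp hc).resolve_right hχ), one_smul]

/-- An operator commuting with the stabilizer group of a stabilizer state has that state as an
eigenvector, since the average of the group is a projection of trace one. -/
lemma exists_eigenvalue_of_commute {n : ℕ} {χ : QVec n} (hχ : χ ≠ 0)
    (hcard : (stabGroup χ).ncard = 2 ^ n) {P : QMat n}
    (hP : ∀ S ∈ stabGroup χ, P * S = S * P) : ∃ c : ℂ, P *ᵥ χ = c • χ := by
  have hfin : (stabGroup χ).Finite := Set.finite_of_ncard_ne_zero (by rw [hcard]; exact pow_ne_zero n two_ne_zero)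
  set G := hfin.toFinset with hG
  have hmem : ∀ {S}, S ∈ G ↔ S ∈ stabGroup χ := by simp [hG]
  have hGcard : G.card = 2 ^ n := by rw [← hcard, Set.ncard_eq_toFinset_card _ hfin]
  set A : QMat n := ((2 : ℂ) ^ n)⁻¹ • ∑ S ∈ G, S with hA
  have h2 : ((2 : ℂ) ^ n) ≠ 0 := pow_ne_zero n two_ne_zero
  have habsorb : ∀ S ∈ G, S * ∑ R ∈ G, R = ∑ R ∈ G, R := fun S hS => by
    have hSS := mul_self_of_mem_stabGroup hχ (hmem.1 hS)
    rw [Finset.mul_sum]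
    refine Finset.sum_bij' (fun R _ => S * R) (fun R _ => S * R)
      (fun R hR => hmem.2 (mul_mem_stabGroup (hmem.1 hS) (hmem.1 hR)))
      (fun R hR => hmem.2 (mul_mem_stabGroup (hmem.1 hS) (hmem.1 hR))) ?_ ?_ (fun _ _ => rfl)
    all_goals intro R _; simp only [← Matrix.mul_assoc, hSS, Matrix.one_mul]
  have hidem : A * A = A := by
    have : (∑ S ∈ G, S) * (∑ R ∈ G, R) = ((2 : ℂ) ^ n) • ∑ R ∈ G, R := by
      rw [Finset.sum_mul, Finset.sum_congr rfl habsorb, Finset.sum_const, hGcard,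
        ← Nat.cast_smul_eq_nsmul ℂ]
      simp
    rw [hA, Matrix.smul_mul, Matrix.mul_smul, this, inv_smul_smul₀ h2]
  have htrace : A.trace = 1 := by
    rw [hA, Matrix.trace_smul, Matrix.trace_sum, Finset.sum_eq_single_of_mem 1
      (hmem.2 (one_mem_stabGroup χ))
      fun S hS h1 => trace_eq_zero_of_mem_stabGroup hχ (hmem.1 hS) h1]
    simp [Matrix.trace_one, h2]
  have hAχ : A *ᵥ χ = χ := by
    rw [hA, Matrix.smul_mulVec, Matrix.sum_mulVec,
      Finset.sum_congr rfl fun S hS => (hmem.1 hS).2, Finset.sum_const, hGcard,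
      ← Nat.cast_smul_eq_nsmul ℂ, Nat.cast_pow, Nat.cast_ofNat, inv_smul_smul₀ h2]
  have hAP : A *ᵥ (P *ᵥ χ) = P *ᵥ χ := by
    have hcomm : A * P = P * A := by
      rw [hA, Matrix.smul_mul, Matrix.mul_smul, Finset.sum_mul, Finset.mul_sum,
        Finset.sum_congr rfl fun S hS => (hP S (hmem.1 hS)).symm]
    rw [Matrix.mulVec_mulVec, hcomm, ← Matrix.mulVec_mulVec, hAχ]
  set f := Matrix.toLin' A with hf
  have hproj : IsIdempotentElem f := by
    rw [IsIdempotentElem, hf, Module.End.mul_eq_comp, ← Matrix.toLin'_mul, hidem]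
  have hrank : Module.finrank ℂ (LinearMap.range f) = 1 := by
    have h := (LinearMap.IsIdempotentElem.isProj_range f hproj).trace
    rw [hf, Matrix.trace_toLin'_eq, htrace] at h
    exact_mod_cast h.symm
  obtain ⟨c, hc⟩ := (finrank_eq_one_iff_of_nonzero' (⟨χ, χ, hAχ⟩ : LinearMap.range f)
    (by simpa [Subtype.ext_iff] using hχ)).mp hrank ⟨P *ᵥ χ, P *ᵥ χ, hAP⟩
  exact ⟨c, (congrArg Subtype.val hc).symm⟩

/-- A Pauli operator either has a stabilizer state as an eigenvector or has expectation zero. -/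
lemma IsPauli.eigenvector_or_expect_eq_zero {n : ℕ} {P : QMat n} (hP : IsPauli P)
    {χ : QVec n} (hχ : χ ≠ 0) (hcard : (stabGroup χ).ncard = 2 ^ n) :
    (∃ c : ℂ, P *ᵥ χ = c • χ) ∨ expect χ P = 0 := by
  by_cases h : ∀ S ∈ stabGroup χ, P * S = S * P
  · exact Or.inl (exists_eigenvalue_of_commute hχ hcard h)
  · push Not at h
    obtain ⟨S, hS, hne⟩ := h
    exact Or.inr (expect_eq_zero_of_anticommute hS.1.conjTranspose_mul_self hS.2
      ((hP.commute_or_anticommute hS.1).resolve_left hne))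

lemma stabGroup_smul {n : ℕ} {r : ℝ} (hr : r ≠ 0) (χ : QVec n) :
    stabGroup (r • χ) = stabGroup χ := by
  ext P
  simp only [stabGroup, Set.mem_ofPred_eq, Matrix.mulVec_smul]
  rw [(smul_right_injective (QVec n) hr).eq_iff]

lemma IsPauli.sq_eigenvalue {n : ℕ} {P : QMat n} (hP : IsPauli P) {χ : QVec n} (hχ : χ ≠ 0)
    {c : ℂ} (h : P *ᵥ χ = c • χ) : c ^ 2 = 1 ∨ c ^ 2 = -1 := by
  have h2 : (P * P) *ᵥ χ = (c ^ 2) • χ := by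
    rw [← Matrix.mulVec_mulVec, h, Matrix.mulVec_smul, h, smul_smul, sq]
  refine hP.mul_self.imp (fun h1 => ?_) fun h1 => ?_
  · rw [h1, Matrix.one_mulVec] at h2
    exact smul_left_injective ℂ hχ (by simpa using h2.symm)
  · rw [h1, Matrix.neg_mulVec, Matrix.one_mulVec] at h2
    exact smul_left_injective ℂ hχ (by simpa using h2.symm)

/-- The `T` gate preserves the norm of a state fixed by a unitary anticommuting with `Z`, and
shrinks the expectation of such a unitary to `Re e^{iπ/4}`. -/
lemma expect_Tgate {n : ℕ} {ψ : QVec n} (j : Fin n) {P : QMat n} (hP : Pᴴ * P = 1)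
    (hψ : P *ᵥ ψ = ψ) (hZP : opAt j σZ * P = -(P * opAt j σZ)) :
    expect (opAt j Tgate *ᵥ ψ) 1 = expect ψ 1 ∧
      expect (opAt j Tgate *ᵥ ψ) P = (tPhase + star tPhase) / 2 * expect ψ 1 := by
  set Z := opAt j σZ with hZ
  have hZZ : Z * Z = 1 := opAt_σZ_mul_self j
  have hw := star_tPhase_mul
  have hTH : (opAt j Tgate)ᴴ =
      ((1 + star tPhase) / 2) • (1 : QMat n) + ((1 - star tPhase) / 2) • Z := by
    rw [opAt_Tgate, Matrix.conjTranspose_add, Matrix.conjTranspose_smul,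
      Matrix.conjTranspose_smul, opAt_σZ_conjTranspose, Matrix.conjTranspose_one]
    simp [hZ]
  have hPP : expect ψ P = expect ψ 1 := by rw [expect, expect, hψ, Matrix.one_mulVec]
  have hPZ : expect ψ (P * Z) = 0 := expect_eq_zero_of_anticommute hP hψ (by
    rw [Matrix.mul_assoc, hZP, Matrix.mul_neg])
  rw [expect_mulVec, expect_mulVec, hTH, opAt_Tgate, ← hZ]
  constructor
  · congr 1
    simp only [Matrix.add_mul, Matrix.mul_add, Matrix.smul_mul, Matrix.mul_smul, Matrix.one_mul,
      Matrix.mul_one, hZZ]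
    match_scalars
    · linear_combination (1 / 2 : ℂ) * hw
    · linear_combination (-1 / 2 : ℂ) * hw
  · have hexp : (((1 + star tPhase) / 2) • (1 : QMat n) + ((1 - star tPhase) / 2) • Z) * P *
        (((1 + tPhase) / 2) • (1 : QMat n) + ((1 - tPhase) / 2) • Z) =
        ((tPhase + star tPhase) / 2) • P + ((star tPhase - tPhase) / 2) • (P * Z) := by
      simp only [Matrix.add_mul, Matrix.mul_add, Matrix.smul_mul, Matrix.mul_smul,
        Matrix.one_mul, Matrix.mul_one, hZP, Matrix.neg_mul, Matrix.mul_assoc, hZZ]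
      match_scalars <;> ring
    rw [hexp, expect_add, expect_smul, expect_smul, hPZ, hPP, mul_zero, add_zero]

lemma sq_re_tPhase : ((tPhase + star tPhase) / 2) ^ 2 = 1 / 2 := by
  have h1 := tPhase_sq
  have h2 : star tPhase ^ 2 = -Complex.I := by rw [← star_pow, h1]; simp
  linear_combination (1 / 4 : ℂ) * h1 + (1 / 4 : ℂ) * h2 + (1 / 2 : ℂ) * star_tPhase_mul

/-- Projecting with `(1 + N) / 2` halves the expectation of an operator commuting with `N`, when
`N` anticommutes with a unitary that fixes the state and commutes with that operator. -/
lemma expect_projection {n : ℕ} {φ : QVec n} {N Q P : QMat n} (hN : Nᴴ = N) (hNN : N * N = 1)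
    (hQ : Qᴴ * Q = 1) (hφ : Q *ᵥ φ = φ) (hNQ : N * Q = -(Q * N)) (hPQ : P * Q = Q * P)
    (hNP : N * P = P * N) :
    expect (((2 : ℂ)⁻¹ • (1 + N)) *ᵥ φ) P = expect φ P / 2 := by
  have hPN : expect φ (P * N) = 0 := expect_eq_zero_of_anticommute hQ hφ (by
    rw [Matrix.mul_assoc, hNQ, Matrix.mul_neg, ← Matrix.mul_assoc, hPQ, Matrix.mul_assoc])
  have hexp : ((2 : ℂ)⁻¹ • (1 + N))ᴴ * P * ((2 : ℂ)⁻¹ • (1 + N)) =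
      (2 : ℂ)⁻¹ • P + (2 : ℂ)⁻¹ • (P * N) := by
    rw [Matrix.conjTranspose_smul, Matrix.conjTranspose_add, Matrix.conjTranspose_one, hN]
    simp only [Matrix.add_mul, Matrix.mul_add, Matrix.smul_mul, Matrix.mul_smul,
      Matrix.one_mul, Matrix.mul_one, hNP, Matrix.mul_assoc, hNN]
    simp only [star_inv₀, star_ofNat]
    match_scalars <;> norm_num
  rw [expect_mulVec, hexp, expect_add, expect_smul, expect_smul, hPN]
  ring

/-- **A monitor anticommuting with a code stabilizer does not purify** (App. B 2):
in the setting of a single `T` gate applied to stabilizer state `ψ` (with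
generating set `s_1 = g 0, g_2, …, g_n` as below and `𝒢 = ⟨g_2,…,g_n⟩`), if the
Hermitian Pauli `M` anticommutes with some element of `𝒢`, then for either
outcome `m = ±1` with `Πφ ≠ 0` (`Π = (I + mM)/2`, `φ = T_1ψ`), the normalized
post-measurement state is not a stabilizer state. -/
theorem anticommuting_monitor_no_purification {n : ℕ} [NeZero n]
    (ψ : QVec n) (hψ : IsStabState ψ)
    (g : Fin n → QMat n) (hg : IsIndepGenSet ψ g)
    (hanti : opAt (0 : Fin n) σZ * g 0 = -(g 0 * opAt (0 : Fin n) σZ))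
    (hcomm : ∀ i : Fin n, i ≠ 0 →
      opAt (0 : Fin n) σZ * g i = g i * opAt (0 : Fin n) σZ)
    (M : QMat n) (hMP : IsPauli M) (hMH : M.IsHermitian)
    (hManti : ∃ Q ∈ Submonoid.closure {Q : QMat n | ∃ i : Fin n, i ≠ 0 ∧ Q = g i},
      M * Q = -(Q * M))
    (m : ℂ) (hm : m = 1 ∨ m = -1)
    (hne : ((2 : ℂ)⁻¹ • ((1 : QMat n) + m • M)).mulVec
        ((opAt (0 : Fin n) Tgate).mulVec ψ) ≠ 0) :
    ¬ IsStabState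
        ((Real.sqrt (nrmSq (((2 : ℂ)⁻¹ • ((1 : QMat n) + m • M)).mulVec
            ((opAt (0 : Fin n) Tgate).mulVec ψ))))⁻¹ •
          ((2 : ℂ)⁻¹ • ((1 : QMat n) + m • M)).mulVec
            ((opAt (0 : Fin n) Tgate).mulVec ψ)) := by
  obtain ⟨Q, hQmem, hMQ⟩ := hManti
  have hψ0 : ψ ≠ 0 := by
    rintro rfl
    simpa [nrmSq] using hψ.1
  obtain ⟨hQ, hZQ⟩ : Q ∈ stabGroup ψ ∧ opAt 0 σZ * Q = Q * opAt 0 σZ := by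
    refine Submonoid.closure_induction
      (motive := fun R _ => R ∈ stabGroup ψ ∧ opAt 0 σZ * R = R * opAt 0 σZ) ?_ ?_ ?_ hQmem
    · rintro _ ⟨i, hi, rfl⟩
      exact ⟨hg.1 i, hcomm i hi⟩
    · exact ⟨one_mem_stabGroup ψ, by simp⟩
    · rintro R S _ _ ⟨hR, hZR⟩ ⟨hS, hZS⟩
      refine ⟨mul_mem_stabGroup hR hS, ?_⟩
      rw [← Matrix.mul_assoc, hZR, Matrix.mul_assoc, hZS, Matrix.mul_assoc]
  obtain ⟨P, hP, hZP, hMPc⟩ : ∃ P ∈ stabGroup ψ,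
      opAt 0 σZ * P = -(P * opAt 0 σZ) ∧ M * P = P * M := by
    rcases hMP.commute_or_anticommute (hg.1 0).1 with h | h
    · exact ⟨g 0, hg.1 0, hanti, h⟩
    · refine ⟨g 0 * Q, mul_mem_stabGroup (hg.1 0) hQ, ?_, ?_⟩
      · rw [← Matrix.mul_assoc, hanti, Matrix.neg_mul, Matrix.mul_assoc, hZQ, Matrix.mul_assoc]
      · rw [← Matrix.mul_assoc, h, Matrix.neg_mul, Matrix.mul_assoc, hMQ, Matrix.mul_neg,
          neg_neg, Matrix.mul_assoc]
  have hQφ : Q *ᵥ (opAt 0 Tgate *ᵥ ψ) = opAt 0 Tgate *ᵥ ψ := by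
    have hTQ : Q * opAt 0 Tgate = opAt 0 Tgate * Q := by
      simp [opAt_Tgate, Matrix.mul_add, Matrix.add_mul, hZQ]
    rw [Matrix.mulVec_mulVec, hTQ, ← Matrix.mulVec_mulVec, hQ.2]
  have hQQ := hQ.1.conjTranspose_mul_self
  have hMM : M * M = 1 := by
    simpa [hMH.eq] using hMP.conjTranspose_mul_self
  have hN : (m • M)ᴴ = m • M := by
    rcases hm with rfl | rfl <;> simp [hMH.eq]
  have hNN : (m • M) * (m • M) = 1 := by
    rcases hm with rfl | rfl <;> simp [hMM]
  have hNQ : (m • M) * Q = -(Q * (m • M)) := by simp [hMQ]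
  have hNP : (m • M) * P = P * (m • M) := by simp [hMPc]
  have h1 := expect_projection (P := 1) hN hNN hQQ hQφ hNQ (by simp) (by simp)
  have h2 := expect_projection hN hNN hQQ hQφ hNQ (commute_of_mem_stabGroup hψ0 hP hQ) hNP
  obtain ⟨hT1, hTP⟩ := expect_Tgate 0 hP.1.conjTranspose_mul_self hP.2 hZP
  have hunit : expect ψ 1 = 1 := by rw [expect_one, hψ.1, Complex.ofReal_one]
  rw [hT1, hunit] at h1
  rw [hTP, hunit, mul_one] at h2
  generalize ((2 : ℂ)⁻¹ • ((1 : QMat n) + m • M)) *ᵥ (opAt (0 : Fin n) Tgate *ᵥ ψ) = η at *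
  rintro ⟨hnorm, hcard⟩
  have hr : (Real.sqrt (nrmSq η))⁻¹ ≠ 0 := by
    intro h
    rw [h] at hnorm
    simp [nrmSq] at hnorm
  rw [stabGroup_smul hr] at hcard
  have hsq := sq_re_tPhase
  rcases hP.1.eigenvector_or_expect_eq_zero hne hcard with ⟨c, hc⟩ | h0
  · have hcval : c = (tPhase + star tPhase) / 2 := by
      have h3 : expect η P = c * expect η 1 := by
        rw [expect, expect, hc, Matrix.one_mulVec, dotProduct_smul, smul_eq_mul]
      rw [h1, h2] at h3
      linear_combination -2 * h3
    rw [← hcval] at hsq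
    rcases hP.1.sq_eigenvalue hne hc with h | h <;> rw [h] at hsq <;> norm_num at hsq
  · rw [h0] at h2
    rw [show (tPhase + star tPhase) / 2 = 0 by linear_combination -2 * h2] at hsq
    norm_num at hsq

end PaperFormal
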